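/- For every n ≥ 2, the olive tree O_n satisfies χ_L(O_n) = ⌈log_3(n/4)⌉ + 3. -/

import Mathlib

/-!
Lower bound: the color codes of the neighbours of a vertex `x` are pairwise distinct. If `A` is the
set of colors of these neighbours, the code of one of color `j` is `1` at the color of `x`, `0` at
`j`, `1` or `2` on the rest of `A`, and within `1` of the code of `x` elsewhere. So the number of
neighbours is at most `|A| * 2 ^ (|A| - 1) * 3 ^ (k - 1 - |A|) ≤ 4 * 3 ^ (k - 3)`.

Upper bound: number the legs from `0` and write `s = b₀ + 2 * b₁ + 4 * ∑ dᵣ * 3 ^ r` with binary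
digits `b₀, b₁` and ternary digits `dᵣ`. Color the odd depths of leg `s` with one of the colors
`1` and `2`, chosen by `b₀`, and the even depths with `0` or with the remaining one of these colors,
chosen by `b₁`; if `dᵣ ≠ 0`, recolor the vertex at depth `2 + 2 * r + dᵣ` with `3 + r`. Going down a
leg, the distance to a color that is missing on it increases steadily, while the distances to the
colors present reveal the parity of the depth. So the colors `0, 1, 2` determine the depth, `b₀`
and `b₁`, and then the color `3 + r` determines `dᵣ`. All `dᵣ` can be encoded, since a leg with
`dᵣ ≠ 0` has length at least `s + 1 > 4 * 3 ^ r ≥ 4 + 2 * r`.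
-/

open SimpleGraph

/-- Distance from a vertex to a set of vertices, `d(u,S) = min {d(u,v) : v ∈ S}`. -/
noncomputable def distToSet {V : Type*} (G : SimpleGraph V) (u : V) (S : Set V) : ℕ :=
  sInf (G.dist u '' S)

/-- `c` is a locating coloring of `G` with `k` colors: a proper coloring such that any two
distinct vertices are resolved by some color class. -/
def IsLocatingColoring {V : Type*} (G : SimpleGraph V) {k : ℕ} (c : V → Fin k) : Prop :=
  (∀ u v : V, G.Adj u v → c u ≠ c v) ∧
  ∀ u v : V, u ≠ v →
    ∃ i : Fin k, distToSet G u (c ⁻¹' {i}) ≠ distToSet G v (c ⁻¹' {i})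

/-- The locating chromatic number `χ_L(G)`: the least `k` admitting a locating `k`-coloring. -/
noncomputable def locatingChromaticNumber {V : Type*} (G : SimpleGraph V) : ℕ :=
  sInf {k : ℕ | ∃ c : V → Fin k, IsLocatingColoring G c}

/-- The vertex set of the palm `S_n(a_1, …, a_n)`: a hub `none` and, for each leg
`i : Fin n` (representing leg `i+1`), vertices `j : Fin (a (i+1))`
(vertex `some ⟨i, j⟩` represents `a_{i+1, j+1}`). -/
def PalmVert (n : ℕ) (a : ℕ → ℕ) : Type :=
  Option ((i : Fin n) × Fin (a ((i : ℕ) + 1)))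

/-- The palm `S_n(a_1, …, a_n)`: the star `K_{1,n}` whose `i`-th edge has been subdivided
`a_i - 1` times; the hub is joined to the first vertex of each leg, and consecutive
vertices along a leg are adjacent. -/
def Palm (n : ℕ) (a : ℕ → ℕ) : SimpleGraph (PalmVert n a) :=
  SimpleGraph.fromRel fun u v =>
    match u, v with
    | none, some ⟨_, j⟩ => (j : ℕ) = 0
    | some ⟨i, j⟩, some ⟨i', j'⟩ => (i : ℕ) = (i' : ℕ) ∧ (j' : ℕ) = (j : ℕ) + 1
    | _, _ => False

section Distance

variable {V : Type*} {G : SimpleGraph V}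

theorem exists_walk_length_le_of_descent {f : V → ℕ} {v : V}
    (hf : ∀ u ≠ v, ∃ w, G.Adj u w ∧ f w < f u) (u : V) : ∃ p : G.Walk u v, p.length ≤ f u := by
  induction hm : f u using Nat.strong_induction_on generalizing u with
  | _ m ih =>
    by_cases huv : u = v
    · subst huv
      exact ⟨.nil, Nat.zero_le _⟩
    obtain ⟨w, hadj, hlt⟩ := hf u huv
    obtain ⟨p, hp⟩ := ih (f w) (hm ▸ hlt) w rfl
    exact ⟨.cons hadj p, by rw [Walk.length_cons]; omega⟩

theorem le_walk_length_of_adj_le_add_one {f : V → ℕ} {v : V} (hv : f v = 0)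
    (hf : ∀ u w, G.Adj u w → f u ≤ f w + 1) {u : V} (p : G.Walk u v) : f u ≤ p.length := by
  induction p with
  | nil => exact hv.le
  | cons h p ih => exact (hf _ _ h).trans (Nat.add_le_add_right (ih hv) 1)

theorem dist_eq_of_descent {f : V → ℕ} {v : V} (hv : f v = 0)
    (hlip : ∀ u w, G.Adj u w → f u ≤ f w + 1)
    (hdesc : ∀ u ≠ v, ∃ w, G.Adj u w ∧ f w < f u) (u : V) : G.dist u v = f u := by
  obtain ⟨p, hp⟩ := exists_walk_length_le_of_descent hdesc u
  obtain ⟨q, hq⟩ := Reachable.exists_walk_length_eq_dist ⟨p⟩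
  exact le_antisymm ((dist_le p).trans hp) (hq ▸ le_walk_length_of_adj_le_add_one hv hlip q)

theorem distToSet_le_dist {S : Set V} (u : V) {v : V} (hv : v ∈ S) :
    distToSet G u S ≤ G.dist u v :=
  Nat.sInf_le ⟨v, hv, rfl⟩

theorem exists_dist_eq_distToSet {S : Set V} (hS : S.Nonempty) (u : V) :
    ∃ v ∈ S, G.dist u v = distToSet G u S :=
  Nat.sInf_mem (hS.image (G.dist u))

theorem distToSet_eq_dist {S : Set V} {u v : V} (hv : v ∈ S)
    (hmin : ∀ w ∈ S, G.dist u v ≤ G.dist u w) : distToSet G u S = G.dist u v := by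
  obtain ⟨w, hw, hd⟩ := exists_dist_eq_distToSet (G := G) ⟨v, hv⟩ u
  exact le_antisymm (distToSet_le_dist u hv) (hd ▸ hmin w hw)

theorem distToSet_eq_zero_of_mem {S : Set V} {u : V} (hu : u ∈ S) : distToSet G u S = 0 := by
  simpa using distToSet_le_dist (G := G) u hu

theorem distToSet_pos_of_notMem (hG : G.Connected) {S : Set V} (hS : S.Nonempty) {u : V}
    (hu : u ∉ S) : 0 < distToSet G u S := by
  obtain ⟨w, hw, hd⟩ := exists_dist_eq_distToSet (G := G) hS u
  exact hd ▸ hG.pos_dist_of_ne (ne_of_mem_of_not_mem hw hu).symm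

theorem distToSet_le_add_one {u v : V} (h : G.Adj u v) (S : Set V) :
    distToSet G u S ≤ distToSet G v S + 1 := by
  rcases S.eq_empty_or_nonempty with rfl | hS
  · simp [distToSet]
  obtain ⟨w, hw, hd⟩ := exists_dist_eq_distToSet (G := G) hS v
  have hle := distToSet_le_dist (G := G) u hw
  have hstep := h.symm.diff_dist_adj (u := w)
  rw [G.dist_comm (u := w) (v := u), G.dist_comm (u := w) (v := v)] at hstep
  omega

end Distance

section ColorCode

variable {V α : Type*}

/-- The color code of a vertex: its distances from the color classes of `c`. A proper coloring is
locating exactly when its color codes are pairwise distinct. -/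
noncomputable abbrev colorCode (G : SimpleGraph V) (c : V → α) (v : V) (i : α) : ℕ :=
  distToSet G v (c ⁻¹' {i})

theorem IsLocatingColoring.colorCode_injective {G : SimpleGraph V} {k : ℕ} {c : V → Fin k}
    (hc : IsLocatingColoring G c) : (colorCode G c).Injective := by
  intro u v huv
  by_contra hne
  obtain ⟨i, hi⟩ := hc.2 u v hne
  exact hi (congrFun huv i)

theorem exists_isLocatingColoring_of_lt {G : SimpleGraph V} {k : ℕ} {c : V → ℕ}
    (hlt : ∀ v, c v < k) (hproper : ∀ u v, G.Adj u v → c u ≠ c v)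
    (hcode : ∀ u v, (∀ i < k, colorCode G c u i = colorCode G c v i) → u = v) :
    ∃ c' : V → Fin k, IsLocatingColoring G c' := by
  refine ⟨fun v => ⟨c v, hlt v⟩, fun u v huv heq => hproper u v huv (Fin.mk.inj_iff.1 heq),
    fun u v hne => ?_⟩
  by_contra! hall
  refine hne (hcode u v fun i hi => ?_)
  have hclass : (fun v => (⟨c v, hlt v⟩ : Fin k)) ⁻¹' {⟨i, hi⟩} = c ⁻¹' {i} := by
    ext v
    simp
  simpa only [hclass] using hall ⟨i, hi⟩

end ColorCode

section NeighborCount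

variable {ι V : Type*} [DecidableEq ι] {G : SimpleGraph V}

/-- The possible values at the color `i` of the color code of a vertex of color `j` adjacent to a
vertex `x` of color `c₀`, where `A` is the set of colors of the neighbours of `x` and `e` is the
color code of `x`. -/
def neighborCodeValues (c₀ j : ι) (A : Finset ι) (e : ι → ℕ) (i : ι) : Finset ℕ :=
  if i = c₀ then {1} else if i = j then {0} else if i ∈ A then {1, 2} else
    Finset.Icc (e i - 1) (e i + 1)

theorem colorCode_mem_neighborCodeValues (hG : G.Connected) {c : V → ι}
    (hc : ∀ u v, G.Adj u v → c u ≠ c v) {A : Finset ι} {x v : V} (hxv : G.Adj x v)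
    (hA : ∀ i ∈ A, ∃ w, G.Adj x w ∧ c w = i) (i : ι) :
    colorCode G c v i ∈ neighborCodeValues (c x) (c v) A (colorCode G c x) i := by
  have hle : colorCode G c x i ≤ colorCode G c v i + 1 := distToSet_le_add_one hxv _
  have hge : colorCode G c v i ≤ colorCode G c x i + 1 := distToSet_le_add_one hxv.symm _
  unfold neighborCodeValues
  split_ifs with hix hiv hiA
  · subst hix
    have hzero : colorCode G c x (c x) = 0 := distToSet_eq_zero_of_mem rfl
    have hpos : 0 < colorCode G c v (c x) :=
      distToSet_pos_of_notMem hG (S := c ⁻¹' {c x}) ⟨x, rfl⟩ (hc x v hxv).symm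
    simp only [Finset.mem_singleton]
    omega
  · exact Finset.mem_singleton.2 (distToSet_eq_zero_of_mem hiv.symm)
  · obtain ⟨w, hxw, hw⟩ := hA i hiA
    have hone : colorCode G c x i ≤ 1 :=
      (distToSet_le_dist x hw).trans_eq (dist_eq_one_iff_adj.2 hxw)
    have hpos : 0 < colorCode G c v i := distToSet_pos_of_notMem hG ⟨w, hw⟩ (Ne.symm hiv)
    simp only [Finset.mem_insert, Finset.mem_singleton]
    omega
  · rw [Finset.mem_Icc]
    omega

theorem prod_card_neighborCodeValues_le [Fintype ι] {c₀ j : ι} {A : Finset ι} (hc₀ : c₀ ∉ A)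
    (hj : j ∈ A) (e : ι → ℕ) :
    ∏ i, (neighborCodeValues c₀ j A e i).card ≤
      2 ^ (A.card - 1) * 3 ^ (Fintype.card ι - (A.card + 1)) := by
  have hle (i : ι) : (neighborCodeValues c₀ j A e i).card ≤
      (if i ∈ A.erase j then 2 else 1) * (if i ∈ (insert c₀ A)ᶜ then 3 else 1) := by
    simp only [neighborCodeValues, Finset.mem_erase, Finset.mem_compl, Finset.mem_insert]
    split_ifs <;> simp_all
    omega
  calc ∏ i, (neighborCodeValues c₀ j A e i).card
      ≤ ∏ i, ((if i ∈ A.erase j then 2 else 1) * (if i ∈ (insert c₀ A)ᶜ then 3 else 1)) :=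
        Finset.prod_le_prod' fun i _ => hle i
    _ = 2 ^ (A.card - 1) * 3 ^ (Fintype.card ι - (A.card + 1)) := by
        rw [Finset.prod_mul_distrib, Finset.prod_ite_mem, Finset.prod_ite_mem]
        simp only [Finset.univ_inter, Finset.prod_const, Finset.card_erase_of_mem hj,
          Finset.card_compl, Finset.card_insert_of_notMem hc₀]

theorem card_filter_color_eq_le [Fintype ι] (hG : G.Connected) {c : V → ι}
    (hc : ∀ u v, G.Adj u v → c u ≠ c v) (hinj : (colorCode G c).Injective) {x : V}
    {S : Finset V} (hS : ∀ v ∈ S, G.Adj x v) {j : ι} (hj : j ∈ S.image c) :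
    (S.filter fun v => c v = j).card ≤
      2 ^ ((S.image c).card - 1) * 3 ^ (Fintype.card ι - ((S.image c).card + 1)) := by
  have hx : c x ∉ S.image c := by
    rintro hx
    obtain ⟨v, hv, hvx⟩ := Finset.mem_image.1 hx
    exact hc x v (hS v hv) hvx.symm
  have hA : ∀ i ∈ S.image c, ∃ w, G.Adj x w ∧ c w = i := fun i hi =>
    have ⟨w, hw, hwi⟩ := Finset.mem_image.1 hi
    ⟨w, hS w hw, hwi⟩
  refine le_trans ?_ (prod_card_neighborCodeValues_le hx hj (colorCode G c x))
  rw [← Fintype.card_piFinset]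
  refine Finset.card_le_card_of_injOn (colorCode G c) (fun v hv => ?_) hinj.injOn
  obtain ⟨hvS, rfl⟩ := Finset.mem_filter.1 hv
  exact Fintype.mem_piFinset.2 (colorCode_mem_neighborCodeValues hG hc (hS v hvS) hA)

theorem nine_mul_mul_two_pow_le (m : ℕ) : 9 * (m * 2 ^ (m - 1)) ≤ 4 * 3 ^ m := by
  rcases m with _ | _ | m
  · norm_num
  · norm_num
  induction m with
  | zero => norm_num
  | succ m ih =>
    simp only [Nat.add_sub_cancel, pow_succ] at ih ⊢
    nlinarith [Nat.zero_le (m * 2 ^ m)]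

theorem IsLocatingColoring.nine_mul_card_le {k : ℕ} {c : V → Fin k} (hc : IsLocatingColoring G c)
    (hG : G.Connected) {x : V} {S : Finset V} (hS : ∀ v ∈ S, G.Adj x v) :
    9 * S.card ≤ 4 * 3 ^ (k - 1) := by
  set m := (S.image c).card
  have hmk : m ≤ k - 1 := by
    have hsub : S.image c ⊆ Finset.univ.erase (c x) := by
      intro i hi
      obtain ⟨v, hv, rfl⟩ := Finset.mem_image.1 hi
      exact Finset.mem_erase.2 ⟨(hc.1 x v (hS v hv)).symm, Finset.mem_univ _⟩
    simpa using Finset.card_le_card hsub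
  have hcard : S.card ≤ 2 ^ (m - 1) * 3 ^ (k - (m + 1)) * m :=
    Finset.card_le_mul_card_image S _ fun j hj => by
      simpa using card_filter_color_eq_le hG hc.1 hc.colorCode_injective hS hj
  calc 9 * S.card ≤ 9 * (2 ^ (m - 1) * 3 ^ (k - (m + 1)) * m) := Nat.mul_le_mul_left 9 hcard
    _ = 9 * (m * 2 ^ (m - 1)) * 3 ^ (k - (m + 1)) := by ring
    _ ≤ 4 * 3 ^ m * 3 ^ (k - (m + 1)) := Nat.mul_le_mul_right _ (nine_mul_mul_two_pow_le m)
    _ = 4 * 3 ^ (k - 1) := by rw [mul_assoc, ← pow_add]; congr 2; omega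

theorem IsLocatingColoring.card_le {k : ℕ} {c : V → Fin k} (hc : IsLocatingColoring G c)
    (hG : G.Connected) {x : V} {S : Finset V} (hS : ∀ v ∈ S, G.Adj x v) (hcard : 2 ≤ S.card) :
    3 ≤ k ∧ S.card ≤ 4 * 3 ^ (k - 3) := by
  have hnine := hc.nine_mul_card_le hG hS
  have hk : 3 ≤ k := by
    by_contra! hlt
    have hpow : 3 ^ (k - 1) ≤ 3 ^ 1 := Nat.pow_le_pow_right (by norm_num) (by omega)
    omega
  refine ⟨hk, ?_⟩
  rw [show k - 1 = k - 3 + 2 by omega, pow_add] at hnine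
  omega

end NeighborCount

namespace PalmVert

variable {n : ℕ} {a : ℕ → ℕ}

/-- The distance of a vertex of a palm from the hub. -/
def depth : PalmVert n a → ℕ
  | none => 0
  | some ⟨_, j⟩ => j + 1

/-- The index of the leg containing a vertex of a palm, the hub being assigned to leg `0`. -/
def leg : PalmVert n a → ℕ
  | none => 0
  | some ⟨i, _⟩ => i

/-- The hub of a palm. -/
def hub : PalmVert n a := none

/-- The vertex at depth `p + 1` of the leg `s`. -/
def onLeg (s p : ℕ) (hs : s < n) (hp : p < a (s + 1)) : PalmVert n a :=
  some ⟨⟨s, hs⟩, ⟨p, hp⟩⟩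

/-- The distance between two vertices of a palm, in terms of legs and depths. It is correct for the
hub as well, although the hub is arbitrarily assigned to leg `0`. -/
def treeDist (u v : PalmVert n a) : ℕ :=
  if u.leg = v.leg then Nat.dist u.depth v.depth else u.depth + v.depth

@[simp] theorem depth_hub : (hub : PalmVert n a).depth = 0 := rfl

@[simp] theorem depth_onLeg {s p : ℕ} (hs : s < n) (hp : p < a (s + 1)) :
    (onLeg s p hs hp).depth = p + 1 := rfl

@[simp] theorem leg_onLeg {s p : ℕ} (hs : s < n) (hp : p < a (s + 1)) :
    (onLeg s p hs hp).leg = s := rfl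

theorem eq_hub_or_eq_onLeg (u : PalmVert n a) :
    u = hub ∨ ∃ s p, ∃ (hs : s < n) (hp : p < a (s + 1)), u = onLeg s p hs hp := by
  rcases u with _ | ⟨⟨s, hs⟩, ⟨p, hp⟩⟩
  · exact Or.inl rfl
  · exact Or.inr ⟨s, p, hs, hp, rfl⟩

theorem leg_eq_zero_of_depth_eq_zero {u : PalmVert n a} (h : u.depth = 0) : u.leg = 0 := by
  rcases eq_hub_or_eq_onLeg u with rfl | ⟨s, p, hs, hp, rfl⟩
  · rfl
  · simp at h

theorem leg_eq_zero_or_lt (u : PalmVert n a) : u.leg = 0 ∨ u.leg < n := by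
  rcases eq_hub_or_eq_onLeg u with rfl | ⟨s, p, hs, hp, rfl⟩
  · exact Or.inl rfl
  · exact Or.inr hs

theorem ext_leg_depth {u v : PalmVert n a} (hl : u.leg = v.leg) (hd : u.depth = v.depth) :
    u = v := by
  rcases eq_hub_or_eq_onLeg u with rfl | ⟨s, p, hs, hp, rfl⟩ <;>
    rcases eq_hub_or_eq_onLeg v with rfl | ⟨t, q, ht, hq, rfl⟩
  · rfl
  · simp at hd
  · simp at hd
  · simp only [leg_onLeg, depth_onLeg, Nat.add_right_cancel_iff] at hl hd
    subst hl hd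
    rfl

theorem eq_of_depth_eq_zero {u v : PalmVert n a} (hu : u.depth = 0) (hv : v.depth = 0) : u = v :=
  ext_leg_depth
    ((leg_eq_zero_of_depth_eq_zero hu).trans (leg_eq_zero_of_depth_eq_zero hv).symm)
    (hu.trans hv.symm)

theorem exists_depth_eq_of_le {v : PalmVert n a} {d : ℕ} (hd : d ≤ v.depth) :
    ∃ w : PalmVert n a, w.depth = d ∧ (d = 0 ∨ w.leg = v.leg) := by
  rcases d with _ | d
  · exact ⟨hub, rfl, Or.inl rfl⟩
  rcases eq_hub_or_eq_onLeg v with rfl | ⟨s, p, hs, hp, rfl⟩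
  · simp at hd
  · exact ⟨onLeg s d hs (by rw [depth_onLeg] at hd; omega), rfl, Or.inr rfl⟩

theorem exists_leg_eq_depth_eq (ha : ∀ i ≤ n, i ≤ a i) {s p : ℕ} (hs : s < n) (hp : p ≤ s) :
    ∃ v : PalmVert n a, v.leg = s ∧ v.depth = p + 1 :=
  ⟨onLeg s p hs ((Nat.lt_succ_of_le hp).trans_le (ha (s + 1) hs)), rfl, rfl⟩

end PalmVert

namespace Palm

open PalmVert

variable {n : ℕ} {a : ℕ → ℕ}

theorem adj_iff {u v : PalmVert n a} : (Palm n a).Adj u v ↔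
    (v.depth = u.depth + 1 ∧ (u.depth = 0 ∨ u.leg = v.leg)) ∨
      (u.depth = v.depth + 1 ∧ (v.depth = 0 ∨ u.leg = v.leg)) := by
  have hne : u.depth ≠ v.depth → u ≠ v := fun h h' => h (congrArg PalmVert.depth h')
  rcases u with _ | ⟨⟨s, hs⟩, ⟨p, hp⟩⟩ <;> rcases v with _ | ⟨⟨t, ht⟩, ⟨q, hq⟩⟩ <;>
    simp only [PalmVert.depth, PalmVert.leg] at hne ⊢
  · change (_ ≠ _ ∧ (False ∨ False)) ↔ _
    simp
  · change (_ ≠ _ ∧ (q = 0 ∨ False)) ↔ _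
    exact ⟨fun ⟨_, h⟩ => by simpa using h, fun h => ⟨hne (by omega), by simpa using h⟩⟩
  · change (_ ≠ _ ∧ (False ∨ p = 0)) ↔ _
    exact ⟨fun ⟨_, h⟩ => by simpa using h, fun h => ⟨hne (by omega), by simpa using h⟩⟩
  · change (_ ≠ _ ∧ ((s = t ∧ q = p + 1) ∨ (t = s ∧ p = q + 1))) ↔ _
    exact ⟨fun h => by omega, fun h => ⟨hne (by omega), by omega⟩⟩

theorem treeDist_le_add_one_of_adj {u w : PalmVert n a} (h : (Palm n a).Adj u w)
    (v : PalmVert n a) : treeDist u v ≤ treeDist w v + 1 := by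
  have hu := @leg_eq_zero_of_depth_eq_zero n a u
  have hw := @leg_eq_zero_of_depth_eq_zero n a w
  rw [adj_iff] at h
  unfold treeDist Nat.dist
  split_ifs <;> omega

theorem exists_adj_treeDist_lt {u v : PalmVert n a} (huv : u ≠ v) :
    ∃ w, (Palm n a).Adj u w ∧ treeDist w v < treeDist u v := by
  have hext := mt (fun h : u.leg = v.leg ∧ u.depth = v.depth => ext_leg_depth h.1 h.2) huv
  have hu := @leg_eq_zero_of_depth_eq_zero n a u
  have hv := @leg_eq_zero_of_depth_eq_zero n a v
  by_cases hbelow : u.depth < v.depth ∧ (u.depth = 0 ∨ u.leg = v.leg)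
  · obtain ⟨w, hwd, hwl⟩ := exists_depth_eq_of_le hbelow.1
    refine ⟨w, adj_iff.2 (by omega), ?_⟩
    unfold treeDist Nat.dist
    split_ifs <;> omega
  · obtain ⟨w, hwd, hwl⟩ := exists_depth_eq_of_le (Nat.sub_le u.depth 1)
    have hw := @leg_eq_zero_of_depth_eq_zero n a w
    refine ⟨w, adj_iff.2 (by omega), ?_⟩
    unfold treeDist Nat.dist
    split_ifs <;> omega

theorem dist_eq_treeDist (u v : PalmVert n a) : (Palm n a).dist u v = treeDist u v :=
  dist_eq_of_descent (f := fun u => treeDist u v) (by simp [treeDist])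
    (fun _ _ h => treeDist_le_add_one_of_adj h v) (fun _ h => exists_adj_treeDist_lt h) u

theorem connected : (Palm n a).Connected :=
  haveI : Nonempty (PalmVert n a) := ⟨hub⟩
  ⟨fun _ v => ⟨(exists_walk_length_le_of_descent (f := fun u => treeDist u v)
    (fun _ h => exists_adj_treeDist_lt h) _).choose⟩⟩

theorem distToSet_eq_depth_add_depth {u v : PalmVert n a} {S : Set (PalmVert n a)} (hv : v ∈ S)
    (hmin : ∀ w ∈ S, v.depth ≤ w.depth)
    (hleg : ∀ w ∈ S, u.leg = w.leg → u.depth = 0 ∨ w.depth = 0) :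
    distToSet (Palm n a) u S = u.depth + v.depth := by
  have hdist : ∀ w ∈ S, (Palm n a).dist u w = u.depth + w.depth := by
    intro w hw
    have hzero := hleg w hw
    rw [dist_eq_treeDist]
    unfold treeDist Nat.dist
    split_ifs <;> omega
  rw [← hdist v hv]
  refine distToSet_eq_dist hv fun w hw => ?_
  rw [hdist v hv, hdist w hw]
  exact Nat.add_le_add_left (hmin w hw) _

theorem exists_hub_neighbors (ha : ∀ i < n, 0 < a (i + 1)) :
    ∃ S : Finset (PalmVert n a), S.card = n ∧ ∀ v ∈ S, (Palm n a).Adj hub v := by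
  let first : Fin n ↪ PalmVert n a :=
    ⟨fun s => onLeg s 0 s.2 (ha s s.2), fun s t h => Fin.ext (by simpa using congrArg leg h)⟩
  refine ⟨Finset.univ.map first, by simp, fun v hv => ?_⟩
  obtain ⟨s, -, rfl⟩ := Finset.mem_map.1 hv
  exact adj_iff.2 (Or.inl ⟨rfl, Or.inl rfl⟩)

/-- The color at the odd depths of leg `s`, up to marker colors. -/
def mainColor (s : ℕ) : ℕ := 1 + s % 2

/-- The one of the colors `1` and `2` that is not the main color of leg `s`. -/
def otherColor (s : ℕ) : ℕ := 2 - s % 2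

/-- The ternary digit number `r` of `s / 4`. It governs the marker color `3 + r` on leg `s`: that
color is absent if the digit is `0`, and otherwise occurs only at depth `2 + 2 * r + digit s r`. -/
def digit (s r : ℕ) : ℕ := s / 4 / 3 ^ r % 3

/-- The color at depth `p` of leg `s` in a locating coloring of a palm. Up to marker colors, the
main color of the leg alternates with `0` or with the other color, according to the second binary
digit of `s`. Depths `3 + 2 * r` and `4 + 2 * r` are reserved for the marker color `3 + r`. -/
def color (s p : ℕ) : ℕ :=
  if p = 0 then 0
  else if 3 ≤ p ∧ digit s ((p - 3) / 2) = 1 + (p - 3) % 2 then 3 + (p - 3) / 2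
  else if p % 2 = 1 then mainColor s
  else if s / 2 % 2 = 0 then 0 else otherColor s

theorem digit_lt_three (s r : ℕ) : digit s r < 3 := Nat.mod_lt _ (by norm_num)

theorem four_mul_pow_le_of_digit_ne_zero {s r : ℕ} (h : digit s r ≠ 0) : 4 * 3 ^ r ≤ s := by
  by_contra hlt
  exact h (by rw [digit, Nat.div_eq_of_lt (by omega : s / 4 < 3 ^ r)])

theorem digit_four_mul_pow (r : ℕ) : digit (4 * 3 ^ r) r = 1 := by
  have hpos : 0 < 3 ^ r := by positivity
  simp [digit, Nat.div_self hpos]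

theorem div_four_eq_of_digit_eq {K s t : ℕ} (hs : s < 4 * 3 ^ K) (ht : t < 4 * 3 ^ K)
    (h : ∀ r < K, digit s r = digit t r) : s / 4 = t / 4 := by
  have hdigits : finFunctionFinEquiv.symm (⟨s / 4, by omega⟩ : Fin (3 ^ K)) =
      finFunctionFinEquiv.symm ⟨t / 4, by omega⟩ :=
    funext fun r => Fin.ext (h r r.2)
  exact Fin.mk.inj_iff.1 (finFunctionFinEquiv.symm.injective hdigits)

theorem four_add_two_mul_le (r : ℕ) : 4 + 2 * r ≤ 4 * 3 ^ r := by
  induction r with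
  | zero => simp
  | succ r ih => rw [pow_succ]; omega

@[simp] theorem color_zero (s : ℕ) : color s 0 = 0 := rfl

@[simp] theorem color_one (s : ℕ) : color s 1 = mainColor s := by simp [color]

theorem color_two {s : ℕ} (h : s / 2 % 2 = 1) : color s 2 = otherColor s := by simp [color, h]

theorem even_of_color_eq_zero {s p : ℕ} (h : color s p = 0) : p % 2 = 0 := by
  unfold color mainColor at h
  split_ifs at h <;> omega

theorem eq_zero_of_color_eq_zero {s p : ℕ} (hs : s / 2 % 2 = 1) (h : color s p = 0) : p = 0 := by
  unfold color mainColor otherColor at h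
  split_ifs at h <;> omega

theorem odd_of_color_eq_mainColor {s p : ℕ} (h : color s p = mainColor s) : p % 2 = 1 := by
  unfold color mainColor otherColor at h
  split_ifs at h <;> omega

theorem even_and_div_two_odd_of_color_eq_otherColor {s p : ℕ} (h : color s p = otherColor s) :
    p % 2 = 0 ∧ s / 2 % 2 = 1 := by
  unfold color mainColor otherColor at h
  split_ifs at h <;> omega

theorem color_eq_marker_iff {s p r : ℕ} :
    color s p = 3 + r ↔ digit s r ≠ 0 ∧ p = 2 + 2 * r + digit s r := by
  have hlt := digit_lt_three s r
  constructor
  · intro h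
    unfold color mainColor otherColor at h
    split_ifs at h with _ hmark
    · omega
    · obtain rfl : (p - 3) / 2 = r := by omega
      omega
    all_goals omega
  · rintro ⟨hdigit, hp⟩
    have hr : (p - 3) / 2 = r := by omega
    unfold color
    rw [hr, if_neg (by omega), if_pos (by omega)]

theorem color_ne_color_succ (s p : ℕ) : color s p ≠ color s (p + 1) := by
  intro h
  rcases Nat.lt_or_ge (color s p) 3 with hlt | hge
  · have hcases : color s p = 0 ∨ color s p = mainColor s ∨ color s p = otherColor s := by
      unfold mainColor otherColor
      omega
    rcases hcases with h' | h' | h'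
    · have := even_of_color_eq_zero h'
      have := even_of_color_eq_zero (h.symm.trans h')
      omega
    · have := odd_of_color_eq_mainColor h'
      have := odd_of_color_eq_mainColor (h.symm.trans h')
      omega
    · have := even_and_div_two_odd_of_color_eq_otherColor h'
      have := even_and_div_two_odd_of_color_eq_otherColor (h.symm.trans h')
      omega
  · obtain ⟨r, hr⟩ := Nat.exists_eq_add_of_le hge
    have := color_eq_marker_iff.1 hr
    have := color_eq_marker_iff.1 (h.symm.trans hr)
    omega

theorem color_lt {K s : ℕ} (hs : s < 4 * 3 ^ K) (p : ℕ) : color s p < K + 3 := by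
  by_contra! hge
  obtain ⟨r, hr⟩ := Nat.exists_eq_add_of_le (show 3 ≤ color s p by omega)
  have hle := four_mul_pow_le_of_digit_ne_zero (color_eq_marker_iff.1 hr).1
  have hpow : 3 ^ K ≤ 3 ^ r := Nat.pow_le_pow_right (by norm_num) (by omega)
  omega

/-- The coloring of the vertices of a palm by `color`. -/
def coloring (v : PalmVert n a) : ℕ := color v.leg v.depth

theorem coloring_ne_of_adj {u v : PalmVert n a} (h : (Palm n a).Adj u v) :
    coloring u ≠ coloring v := by
  wlog hd : v.depth = u.depth + 1 generalizing u v
  · exact (this h.symm (by rw [adj_iff] at h; omega)).symm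
  have hbelow : u.depth = 0 ∨ u.leg = v.leg := by rw [adj_iff] at h; omega
  unfold coloring
  rw [hd]
  rcases hbelow with h0 | hl
  · rw [h0, color_zero, color_one]
    unfold mainColor
    omega
  · rw [hl]
    exact color_ne_color_succ _ _

theorem exists_coloring_eq_treeDist_eq_colorCode (u : PalmVert n a) {v : PalmVert n a} {i : ℕ}
    (hv : coloring v = i) :
    ∃ w : PalmVert n a, coloring w = i ∧ treeDist u w = colorCode (Palm n a) coloring u i := by
  obtain ⟨w, hw, hd⟩ := exists_dist_eq_distToSet (G := Palm n a) (S := coloring ⁻¹' {i}) ⟨v, hv⟩ u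
  exact ⟨w, hw, dist_eq_treeDist u w ▸ hd⟩

theorem colorCode_le_treeDist (u : PalmVert n a) {v : PalmVert n a} {i : ℕ}
    (hv : coloring v = i) : colorCode (Palm n a) coloring u i ≤ treeDist u v :=
  dist_eq_treeDist u v ▸ distToSet_le_dist (S := coloring ⁻¹' {i}) u hv

theorem colorCode_zero_mod_two (u : PalmVert n a) :
    colorCode (Palm n a) coloring u 0 % 2 = u.depth % 2 := by
  obtain ⟨w, hw, hd⟩ := exists_coloring_eq_treeDist_eq_colorCode u (v := hub) (i := 0) rfl
  have heven := even_of_color_eq_zero hw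
  rw [← hd]
  unfold treeDist Nat.dist
  split_ifs <;> omega

theorem colorCode_zero_eq_depth {u : PalmVert n a} (hu : u.leg / 2 % 2 = 1) :
    colorCode (Palm n a) coloring u 0 = u.depth :=
  distToSet_eq_depth_add_depth (v := hub) rfl (fun _ _ => Nat.zero_le _) fun _ hw hl =>
    Or.inr (eq_zero_of_color_eq_zero (hl ▸ hu) hw)

theorem colorCode_mainColor {u : PalmVert n a} (hu : 0 < u.depth) :
    colorCode (Palm n a) coloring u (mainColor u.leg) < u.depth ∧
      colorCode (Palm n a) coloring u (mainColor u.leg) % 2 ≠ u.depth % 2 := by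
  obtain ⟨v, hvd, hvl⟩ := exists_depth_eq_of_le hu
  replace hvl : v.leg = u.leg := hvl.resolve_left one_ne_zero
  have hv : coloring v = mainColor u.leg := by rw [coloring, hvl, hvd, color_one]
  have hle := colorCode_le_treeDist u hv
  obtain ⟨w, hw, hd⟩ := exists_coloring_eq_treeDist_eq_colorCode u hv
  have hodd (hl : u.leg = w.leg) := odd_of_color_eq_mainColor (hl ▸ hw)
  unfold treeDist Nat.dist at hle hd
  rw [if_pos hvl.symm] at hle
  split_ifs at hd <;> omega

theorem depth_pos_of_coloring_ne_zero {v : PalmVert n a} (hv : coloring v ≠ 0) : 0 < v.depth := by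
  refine Nat.pos_of_ne_zero fun h => hv ?_
  rw [coloring, h, color_zero]

theorem colorCode_eq_depth_add_one (hn : 2 ≤ n) (ha : ∀ i ≤ n, i ≤ a i) {u : PalmVert n a} {i : ℕ}
    (hi : i = 1 ∨ i = 2) (hu : u.depth = 0 ∨ ∀ p, color u.leg p ≠ i) :
    colorCode (Palm n a) coloring u i = u.depth + 1 := by
  obtain ⟨v, hvl, hvd⟩ := exists_leg_eq_depth_eq ha (s := i - 1) (by omega) (Nat.zero_le _)
  have hv : coloring v = i := by
    rw [coloring, hvl, hvd, color_one]
    unfold mainColor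
    omega
  have hmin : ∀ w : PalmVert n a, coloring w = i → v.depth ≤ w.depth := by
    intro w hw
    have := depth_pos_of_coloring_ne_zero (v := w) (by omega)
    omega
  rw [← hvd.trans (zero_add 1)]
  exact distToSet_eq_depth_add_depth hv hmin fun w hw hl =>
    hu.imp_right fun h => absurd (by rw [hl]; exact hw) (h w.depth)

theorem colorCode_otherColor_of_even (hn : 2 ≤ n) (ha : ∀ i ≤ n, i ≤ a i) {u : PalmVert n a}
    (hu : u.leg / 2 % 2 = 0) :
    colorCode (Palm n a) coloring u (otherColor u.leg) = u.depth + 1 := by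
  refine colorCode_eq_depth_add_one hn ha (by unfold otherColor; omega) (Or.inr fun p hp => ?_)
  have := (even_and_div_two_odd_of_color_eq_otherColor hp).2
  omega

theorem colorCode_otherColor_of_odd (ha : ∀ i ≤ n, i ≤ a i) {u : PalmVert n a}
    (hu : u.leg / 2 % 2 = 1) :
    colorCode (Palm n a) coloring u (otherColor u.leg) % 2 = u.depth % 2 := by
  have hpos : 0 < u.depth := by
    by_contra! h
    rw [leg_eq_zero_of_depth_eq_zero (by omega)] at hu
    omega
  have hlt := leg_eq_zero_or_lt u
  obtain ⟨v, hvl, hvd⟩ := exists_leg_eq_depth_eq ha (s := u.leg) (p := 1) (by omega) (by omega)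
  have hv : coloring v = otherColor u.leg := by rw [coloring, hvl, hvd, color_two hu]
  have hle := colorCode_le_treeDist u hv
  obtain ⟨w, hw, hd⟩ := exists_coloring_eq_treeDist_eq_colorCode u hv
  have heven (hl : u.leg = w.leg) := (even_and_div_two_odd_of_color_eq_otherColor (hl ▸ hw)).1
  have hwpos := depth_pos_of_coloring_ne_zero (v := w) (by rw [hw, otherColor]; omega)
  unfold treeDist Nat.dist at hle hd
  rw [if_pos hvl.symm] at hle
  split_ifs at hd <;> omega

theorem colorCode_marker_of_digit_eq_zero (ha : ∀ i ≤ n, i ≤ a i) {r : ℕ} (hr : 4 * 3 ^ r < n)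
    {u : PalmVert n a} (hu : digit u.leg r = 0) :
    colorCode (Palm n a) coloring u (3 + r) = u.depth + (3 + 2 * r) := by
  have hlong := four_add_two_mul_le r
  obtain ⟨v, hvl, hvd⟩ := exists_leg_eq_depth_eq ha hr (p := 2 + 2 * r) (by omega)
  replace hvd : v.depth = 3 + 2 * r := by omega
  have hv : coloring v = 3 + r := by
    rw [coloring, hvl, hvd, color_eq_marker_iff, digit_four_mul_pow]
    omega
  have hmin : ∀ w : PalmVert n a, coloring w = 3 + r → v.depth ≤ w.depth := by
    intro w hw
    have := color_eq_marker_iff.1 hw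
    omega
  rw [← hvd]
  refine distToSet_eq_depth_add_depth hv hmin fun w hw hl => ?_
  exact absurd (hl ▸ hu) (color_eq_marker_iff.1 hw).1

theorem colorCode_marker_of_digit_ne_zero (ha : ∀ i ≤ n, i ≤ a i) {r : ℕ} {u : PalmVert n a}
    (hu : digit u.leg r ≠ 0) :
    colorCode (Palm n a) coloring u (3 + r) = Nat.dist u.depth (2 + 2 * r + digit u.leg r) := by
  have hlong := four_add_two_mul_le r
  have hleg := four_mul_pow_le_of_digit_ne_zero hu
  have hlt := digit_lt_three u.leg r
  have hpos : 0 < u.depth := by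
    by_contra! h
    have := leg_eq_zero_of_depth_eq_zero (u := u) (by omega)
    omega
  have hleg_lt := leg_eq_zero_or_lt u
  obtain ⟨v, hvl, hvd⟩ := exists_leg_eq_depth_eq ha (s := u.leg)
    (p := 1 + 2 * r + digit u.leg r) (by omega) (by omega)
  replace hvd : v.depth = 2 + 2 * r + digit u.leg r := by omega
  have hv : coloring v = 3 + r := by
    rw [coloring, hvl, hvd]
    exact color_eq_marker_iff.2 ⟨hu, rfl⟩
  have hdist : (Palm n a).dist u v = Nat.dist u.depth (2 + 2 * r + digit u.leg r) := by
    rw [dist_eq_treeDist, treeDist, if_pos hvl.symm, hvd]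
  rw [← hdist]
  refine distToSet_eq_dist hv fun w hw => ?_
  have hw' := color_eq_marker_iff.1 hw
  rw [hdist, dist_eq_treeDist]
  unfold treeDist Nat.dist
  split_ifs with hl
  · rw [hw'.2, hl]
  · omega

theorem depth_eq_zero_of_colorCode_eq (hn : 2 ≤ n) (ha : ∀ i ≤ n, i ≤ a i) {u v : PalmVert n a}
    (hv : v.depth = 0)
    (h : ∀ i < 3, colorCode (Palm n a) coloring u i = colorCode (Palm n a) coloring v i) :
    u.depth = 0 := by
  rcases Nat.mod_two_eq_zero_or_one (u.leg / 2) with hu | hu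
  · have hother : otherColor u.leg = 1 ∨ otherColor u.leg = 2 := by unfold otherColor; omega
    have hcode := h (otherColor u.leg) (by omega)
    rw [colorCode_otherColor_of_even hn ha hu,
      colorCode_eq_depth_add_one hn ha hother (Or.inl hv)] at hcode
    omega
  · have hzero : coloring v = 0 := by rw [coloring, hv, color_zero]
    rw [← colorCode_zero_eq_depth hu, h 0 (by norm_num)]
    exact distToSet_eq_zero_of_mem hzero

theorem leg_mod_two_eq_of_colorCode_eq (hn : 2 ≤ n) (ha : ∀ i ≤ n, i ≤ a i) {u v : PalmVert n a}
    (hu : 0 < u.depth) (hv : 0 < v.depth)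
    (h : ∀ i < 3, colorCode (Palm n a) coloring u i = colorCode (Palm n a) coloring v i) :
    u.leg % 2 = v.leg % 2 := by
  by_contra hne
  -- The main color of the leg of `u` is the other color of the leg of `v`. By parity it is missing
  -- there, so its distance from `v` is `v.depth + 1`, while its distance from `u` is less than
  -- `u.depth`. By symmetry, each of the two depths would exceed the other.
  have hlt : ∀ u v : PalmVert n a, 0 < u.depth → u.leg % 2 ≠ v.leg % 2 →
      (∀ i < 3, colorCode (Palm n a) coloring u i = colorCode (Palm n a) coloring v i) →
      v.depth < u.depth := by
    intro u v hu hne h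
    have hswap : mainColor u.leg = otherColor v.leg := by unfold mainColor otherColor; omega
    have hmain := colorCode_mainColor hu
    rw [h _ (by unfold mainColor; omega), hswap] at hmain
    have hzero := h 0 (by norm_num)
    have hpu := colorCode_zero_mod_two u
    have hpv := colorCode_zero_mod_two v
    rcases Nat.mod_two_eq_zero_or_one (v.leg / 2) with hv | hv
    · rw [colorCode_otherColor_of_even hn ha hv] at hmain
      omega
    · have := colorCode_otherColor_of_odd ha hv
      omega
  have huv := hlt u v hu hne h
  have hvu := hlt v u hv (Ne.symm hne) fun i hi => (h i hi).symm
  omega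

theorem depth_eq_and_div_two_mod_two_eq_of_colorCode_eq (hn : 2 ≤ n) (ha : ∀ i ≤ n, i ≤ a i)
    {u v : PalmVert n a} (hmod : u.leg % 2 = v.leg % 2)
    (h : ∀ i < 3, colorCode (Palm n a) coloring u i = colorCode (Palm n a) coloring v i) :
    u.depth = v.depth ∧ u.leg / 2 % 2 = v.leg / 2 % 2 := by
  have hzero := h 0 (by norm_num)
  have hother := h (otherColor u.leg) (by unfold otherColor; omega)
  have hsame : otherColor u.leg = otherColor v.leg := by unfold otherColor; omega
  have hpu := colorCode_zero_mod_two u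
  have hpv := colorCode_zero_mod_two v
  rcases Nat.mod_two_eq_zero_or_one (u.leg / 2) with hu | hu <;>
    rcases Nat.mod_two_eq_zero_or_one (v.leg / 2) with hv | hv
  · rw [colorCode_otherColor_of_even hn ha hu, hsame,
      colorCode_otherColor_of_even hn ha hv] at hother
    omega
  · have hmod_v := colorCode_otherColor_of_odd ha hv
    rw [colorCode_otherColor_of_even hn ha hu, hsame] at hother
    omega
  · have hmod_u := colorCode_otherColor_of_odd ha hu
    rw [hother, hsame, colorCode_otherColor_of_even hn ha hv] at hmod_u
    omega
  · rw [colorCode_zero_eq_depth hu, colorCode_zero_eq_depth hv] at hzero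
    omega

theorem digit_eq_of_colorCode_eq (ha : ∀ i ≤ n, i ≤ a i) {r : ℕ} (hr : 4 * 3 ^ r < n)
    {u v : PalmVert n a} (hu : 0 < u.depth) (hd : u.depth = v.depth)
    (h : colorCode (Palm n a) coloring u (3 + r) = colorCode (Palm n a) coloring v (3 + r)) :
    digit u.leg r = digit v.leg r := by
  have hltu := digit_lt_three u.leg r
  have hltv := digit_lt_three v.leg r
  have hzero {w : PalmVert n a} := colorCode_marker_of_digit_eq_zero ha hr (u := w)
  have hne {w : PalmVert n a} := colorCode_marker_of_digit_ne_zero ha (r := r) (u := w)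
  by_cases hdu : digit u.leg r = 0 <;> by_cases hdv : digit v.leg r = 0
  · rw [hdu, hdv]
  · rw [hzero hdu, hne hdv, Nat.dist] at h
    omega
  · rw [hne hdu, hzero hdv, Nat.dist] at h
    omega
  · rw [hne hdu, hne hdv, Nat.dist, Nat.dist] at h
    omega

theorem eq_of_colorCode_eq (hn : 2 ≤ n) (ha : ∀ i ≤ n, i ≤ a i) {K : ℕ} (hK : n ≤ 4 * 3 ^ K)
    (hK' : ∀ r < K, 4 * 3 ^ r < n) {u v : PalmVert n a}
    (h : ∀ i < K + 3, colorCode (Palm n a) coloring u i = colorCode (Palm n a) coloring v i) :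
    u = v := by
  have h3 : ∀ i < 3, colorCode (Palm n a) coloring u i = colorCode (Palm n a) coloring v i :=
    fun i hi => h i (by omega)
  rcases Nat.eq_zero_or_pos v.depth with hv | hv
  · exact eq_of_depth_eq_zero (depth_eq_zero_of_colorCode_eq hn ha hv h3) hv
  rcases Nat.eq_zero_or_pos u.depth with hu | hu
  · exact eq_of_depth_eq_zero hu
      (depth_eq_zero_of_colorCode_eq hn ha hu fun i hi => (h3 i hi).symm)
  have hmod := leg_mod_two_eq_of_colorCode_eq hn ha hu hv h3
  obtain ⟨hdepth, hbit⟩ :=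
    depth_eq_and_div_two_mod_two_eq_of_colorCode_eq hn ha hmod h3
  have hul := leg_eq_zero_or_lt u
  have hvl := leg_eq_zero_or_lt v
  have hdiv : u.leg / 4 = v.leg / 4 :=
    div_four_eq_of_digit_eq (K := K) (by omega) (by omega) fun r hr =>
      digit_eq_of_colorCode_eq ha (hK' r hr) hu hdepth (h _ (by omega))
  exact ext_leg_depth (by omega) hdepth

theorem exists_isLocatingColoring (hn : 2 ≤ n) (ha : ∀ i ≤ n, i ≤ a i) {K : ℕ}
    (hK : n ≤ 4 * 3 ^ K) (hK' : ∀ r < K, 4 * 3 ^ r < n) :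
    ∃ c : PalmVert n a → Fin (K + 3), IsLocatingColoring (Palm n a) c := by
  refine exists_isLocatingColoring_of_lt (c := coloring) (fun v => color_lt ?_ _)
    (fun _ _ => coloring_ne_of_adj) (fun _ _ => eq_of_colorCode_eq hn ha hK hK')
  have := leg_eq_zero_or_lt v
  omega

theorem le_of_isLocatingColoring (hn : 2 ≤ n) (ha : ∀ i < n, 0 < a (i + 1)) {k : ℕ}
    {c : PalmVert n a → Fin k} (hc : IsLocatingColoring (Palm n a) c) :
    3 ≤ k ∧ n ≤ 4 * 3 ^ (k - 3) := by
  obtain ⟨S, hcard, hS⟩ := exists_hub_neighbors ha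
  have hle := hc.card_le connected hS (hcard.symm ▸ hn)
  rwa [hcard] at hle

theorem locatingChromaticNumber_eq (hn : 2 ≤ n) (ha : ∀ i ≤ n, i ≤ a i) {K : ℕ}
    (hK : ∀ m, K ≤ m ↔ n ≤ 4 * 3 ^ m) : locatingChromaticNumber (Palm n a) = K + 3 := by
  have hcol := exists_isLocatingColoring hn ha ((hK K).1 le_rfl) fun r hr => by
    have := hK r
    omega
  refine le_antisymm (Nat.sInf_le hcol) (le_csInf ⟨_, hcol⟩ ?_)
  rintro k ⟨c, hc⟩
  obtain ⟨hk, hle⟩ := le_of_isLocatingColoring hn (fun i hi => i.succ_pos.trans_le (ha _ hi)) hc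
  have := (hK _).2 hle
  omega

end Palm

theorem ceil_logb_le_natCast_iff {b x : ℝ} (hb : 1 < b) (hx : 0 < x) (m : ℕ) :
    ⌈Real.logb b x⌉ ≤ m ↔ x ≤ b ^ m := by
  rw [Int.ceil_le, Int.cast_natCast, Real.logb_le_iff_le_rpow hb hx, Real.rpow_natCast]

theorem locatingChromaticNumber_olive_general {n : ℕ} {a : ℕ → ℕ} (hn : 2 ≤ n)
    (ha : ∀ i ≤ n, i ≤ a i) :
    (locatingChromaticNumber (Palm n a) : ℤ) = ⌈Real.logb 3 ((n : ℝ) / 4)⌉ + 3 := by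
  have hn' : (2 : ℝ) ≤ n := by exact_mod_cast hn
  have hpos : (0 : ℝ) < n / 4 := by positivity
  have hnonneg : 0 ≤ ⌈Real.logb 3 ((n : ℝ) / 4)⌉ := by
    refine Int.ceil_nonneg_of_neg_one_lt ?_
    rw [Real.lt_logb_iff_rpow_lt (by norm_num) hpos, Real.rpow_neg_one]
    linarith
  obtain ⟨K, hK⟩ := Int.eq_ofNat_of_zero_le hnonneg
  have hleast (m : ℕ) : K ≤ m ↔ n ≤ 4 * 3 ^ m := by
    have hiff := ceil_logb_le_natCast_iff (b := 3) (by norm_num) hpos m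
    rw [hK, div_le_iff₀' (by norm_num)] at hiff
    exact_mod_cast hiff
  rw [hK, Palm.locatingChromaticNumber_eq hn ha hleast]
  push_cast
  rfl

/-- For every `n ≥ 2`, the olive tree `O_n = S_n(1, 2, …, n)` satisfies
`χ_L(O_n) = ⌈log_3(n/4)⌉ + 3`. -/
theorem locatingChromaticNumber_olive (n : ℕ) (hn : 2 ≤ n) :
    (locatingChromaticNumber (Palm n id) : ℤ) = ⌈Real.logb 3 ((n : ℝ) / 4)⌉ + 3 :=
  locatingChromaticNumber_olive_general hn fun _ _ => le_rfl
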